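/- Let U be a finite-dimensional 𝔽₂-vector space and let 𝒞 be a set of nonzero linear forms on U with dim_{𝔽₂} span(𝒞) ≤ 2. Then every blowup of the cut template R(U,𝒞) contains no subgraph isomorphic to F := K4⁻ × F*. -/

import Mathlib

open scoped Classical

/-- A collection of finite edge sets is a 3-graph if every edge has exactly 3 vertices. -/
def IsThreeGraph {α : Type*} (H : Set (Finset α)) : Prop := ∀ e ∈ H, e.card = 3

/-- `φ` is a homomorphism of 3-graphs from `G` to `H`: the image of every edge of `G`
is a 3-element set that is an edge of `H`. -/
def IsHomOn {α β : Type*} (G : Set (Finset α)) (H : Set (Finset β)) (φ : α → β) : Prop :=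
  ∀ e ∈ G, (e.image φ).card = 3 ∧ e.image φ ∈ H

/-- `H` contains a subgraph isomorphic to `G`. -/
def ContainsCopy {α β : Type*} (G : Set (Finset α)) (H : Set (Finset β)) : Prop :=
  ∃ φ : α → β, Function.Injective φ ∧ ∀ e ∈ G, e.image φ ∈ H

/-- `K4⁻`, on vertices `a=0, b=1, c=2, d=3`, with edges `abc, abd, acd`. -/
def K4minus : Set (Finset (Fin 4)) := {{0,1,2}, {0,1,3}, {0,2,3}}

/-- `F*`, on vertices `1,…,7` (represented by `0,…,6`), with edges `123, 124, 345, 156, 257`. -/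
def Fstar : Set (Finset (Fin 7)) := {{0,1,2}, {0,1,3}, {2,3,4}, {0,4,5}, {1,4,6}}

/-- The categorical product of two 3-graphs: a 3-element set of pairs is an edge iff
its set of first coordinates is an edge of `G` and its set of second coordinates is an
edge of `H`. -/
def ProdGraph {α β : Type*} (G : Set (Finset α)) (H : Set (Finset β)) :
    Set (Finset (α × β)) :=
  {e | e.card = 3 ∧ e.image Prod.fst ∈ G ∧ e.image Prod.snd ∈ H}

/-- The 3-graph `F := K4⁻ × F*`. -/
def F : Set (Finset (Fin 4 × Fin 7)) := ProdGraph K4minus Fstar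

/-- The cut template `R(U, 𝒞)`: apex vertices indexed by `𝒞`, bottom vertices `U`, and
edges `{a_c, u, v}` for `c ∈ 𝒞` and distinct `u, v ∈ U` with `c (u + v) = 1`. -/
def CutTemplate (U : Type*) [AddCommGroup U] [Module (ZMod 2) U]
    (C : Set (U →ₗ[ZMod 2] ZMod 2)) : Set (Finset (↥C ⊕ U)) :=
  {e | ∃ (c : ↥C) (u v : U), u ≠ v ∧ (c : U →ₗ[ZMod 2] ZMod 2) (u + v) = 1 ∧
      e = {Sum.inl c, Sum.inr u, Sum.inr v}}

/-- The blowup of a 3-graph `T` determined by the part-assignment `g : β → α`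
(the part of a vertex `i` of `T` is `g ⁻¹ {i}`): edges are the 3-element subsets of `β`
whose image under `g` is an edge of `T`. -/
def Blowup {α β : Type*} (T : Set (Finset α)) (g : β → α) : Set (Finset β) :=
  {e | e.card = 3 ∧ e.image g ∈ T}

/-!
A copy of `F = K4⁻ × F*` in a blowup of `R(U, 𝒞)` is a homomorphism `ψ : F → R(U, 𝒞)`. Every edge
of `R(U, 𝒞)` has exactly one apex, so the indicator of the apexes pulls back along `ψ` to a
weighting of `F` whose sum over each edge is `1`. Since `F*` is connected and admits no such
weighting itself, the apexes are forced to be the row over the vertex `0` of `K4⁻`. The triangle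
`1, 2, 3` in the link of `0` then yields forms `c i` and vectors `u j`, indexed by the vertices of
`F*`, such that `c i (u j) ≠ c i (u k)` for every edge `{i, j, k}` of `F*`.

This is impossible if the forms span a space `W` of dimension at most `2`. A nonzero functional on
such a space over `𝔽₂` kills at most one nonzero vector. Applied to `W` and the functional
`u 2 - u 3`, this gives `c 0 = c 1`. Applied to the dual of `W` and evaluation at `c 0`, it says
that all nonzero differences `u j - u k` in the dual that are killed by `c 0` coincide. Hence `c 0`
separates `u 0` from `u 4`, as `u 0 - u 1 = u 0 - u 4` would contradict the edge `{1, 4, 6}`; but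
then `u 2 - u 4 = u 3 - u 4`, contradicting the edge `{2, 3, 4}`.
-/

open Module

lemma zmod_two_eq_of_ne_of_ne {a b c : ZMod 2} : a ≠ b → a ≠ c → b = c := by
  decide +revert

section Definitions

variable {α : Type*}

/-- An `ℕ`-valued weighting whose sum over every edge is `1`. On the vertices covered by edges it
is the indicator function of a vertex set meeting every edge exactly once. -/
def IsUnitWeighting (G : Set (Finset α)) (f : α → ℕ) : Prop := ∀ e ∈ G, ∑ v ∈ e, f v = 1

variable [DecidableEq α]

/-- Connectedness of a 3-graph: a vertex set that contains every edge it meets is empty or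
everything. Edges are given by triples `i, j, k` in every possible order. -/
def IsConnectedThreeGraph (H : Set (Finset α)) : Prop :=
  ∀ s : Set α, (∀ i j k, {i, j, k} ∈ H → i ∈ s → j ∈ s) → s.Nonempty → s = Set.univ

/-- For every vertex `i`, the function `χ i` is a proper colouring of the link graph of `i`, whose
edges are the pairs completed by `i` to an edge of `H`. -/
def IsLinkColoring {γ : Type*} (H : Set (Finset α)) (χ : α → α → γ) : Prop :=
  ∀ i j k, {i, j, k} ∈ H → χ i j ≠ χ i k

end Definitions

section ThreeGraphs

variable {α β : Type*} {G : Set (Finset α)} {H : Set (Finset β)}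

lemma sum_triple_of_card_eq_three {M : Type*} [AddCommMonoid M] [DecidableEq α] {x y z : α}
    (h : ({x, y, z} : Finset α).card = 3) (f : α → M) :
    ∑ v ∈ {x, y, z}, f v = f x + f y + f z := by
  have hx : x ∉ ({y, z} : Finset α) := fun hx => by
    rw [Finset.insert_eq_of_mem hx] at h
    exact absurd (h ▸ Finset.card_le_two) (by decide)
  have hyz : y ≠ z := by
    rintro rfl
    rw [Finset.pair_eq_singleton] at h
    exact absurd (h ▸ Finset.card_le_two) (by decide)
  rw [Finset.sum_insert hx, Finset.sum_pair hyz, add_assoc]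

lemma isThreeGraph_prodGraph : IsThreeGraph (ProdGraph G H) := fun _ he => he.1

lemma insert_mem_prodGraph [DecidableEq α] [DecidableEq β] (hG : IsThreeGraph G) {x y z : α}
    {i j k : β} (hx : {x, y, z} ∈ G) (hi : {i, j, k} ∈ H) :
    {(x, i), (y, j), (z, k)} ∈ ProdGraph G H := by
  have hfst : ({(x, i), (y, j), (z, k)} : Finset (α × β)).image Prod.fst = {x, y, z} := by
    simp [Finset.image_insert]
  have hsnd : ({(x, i), (y, j), (z, k)} : Finset (α × β)).image Prod.snd = {i, j, k} := by
    simp [Finset.image_insert]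
  refine ⟨le_antisymm Finset.card_le_three ?_, ?_, ?_⟩
  · rw [← hG _ hx, ← hfst]
    exact Finset.card_image_le
  · convert hx using 1
    convert hfst
  · convert hi using 1
    convert hsnd

lemma IsUnitWeighting.comp_isHomOn {w : β → ℕ} (hw : IsUnitWeighting H w) (hG : IsThreeGraph G)
    {ψ : α → β} (hψ : IsHomOn G H ψ) : IsUnitWeighting G (w ∘ ψ) := fun e he => by
  obtain ⟨hcard, hmem⟩ := hψ e he
  have hinj : Set.InjOn ψ e := Finset.card_image_iff.1 (hcard.trans (hG e he).symm)
  rw [← hw _ hmem, Finset.sum_image hinj, Function.comp_def]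

lemma IsUnitWeighting.apply_add_apply_add_apply [DecidableEq α] [DecidableEq β]
    {f : α × β → ℕ} (hf : IsUnitWeighting (ProdGraph G H) f) (hG : IsThreeGraph G) {x y z : α}
    {i j k : β} (hx : {x, y, z} ∈ G) (hi : {i, j, k} ∈ H) :
    f (x, i) + f (y, j) + f (z, k) = 1 := by
  have hmem := insert_mem_prodGraph hG hx hi
  rw [← hf _ hmem, sum_triple_of_card_eq_three (isThreeGraph_prodGraph _ hmem)]

lemma ContainsCopy.exists_isHomOn_of_blowup {γ : Type*} {T : Set (Finset γ)} {g : β → γ}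
    (hT : IsThreeGraph T) (h : ContainsCopy G (Blowup T g)) : ∃ ψ, IsHomOn G T ψ := by
  obtain ⟨φ, -, hφ⟩ := h
  refine ⟨g ∘ φ, fun e he => ?_⟩
  rw [← Finset.image_image]
  exact ⟨hT _ (hφ e he).2, (hφ e he).2⟩

end ThreeGraphs

section K4minusProduct

instance : DecidablePred (· ∈ K4minus) := fun e =>
  inferInstanceAs (Decidable (e = {0, 1, 2} ∨ e = {0, 1, 3} ∨ e = {0, 2, 3}))

lemma isThreeGraph_K4minus : IsThreeGraph K4minus := by
  rintro e (rfl | rfl | rfl) <;> rfl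

lemma eq_pi_single_zero_one_iff {r : Fin 4 → ℕ} :
    r = Pi.single 0 1 ↔ r 0 = 1 ∧ r 1 = 0 ∧ r 2 = 0 ∧ r 3 = 0 := by
  simp [funext_iff, Fin.forall_fin_succ, Pi.single_apply]

variable {β : Type*} [DecidableEq β] {H : Set (Finset β)} {f : Fin 4 × β → ℕ} {i j k : β}

namespace IsUnitWeighting

lemma rows_eq_of_K4minus (hf : IsUnitWeighting (ProdGraph K4minus H) f) (he : {i, j, k} ∈ H) :
    f (2, i) = f (1, i) ∧ f (3, i) = f (1, i) := by
  have h210 := hf.apply_add_apply_add_apply isThreeGraph_K4minus (x := 2) (y := 1) (z := 0)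
    (by decide) he
  have h310 := hf.apply_add_apply_add_apply isThreeGraph_K4minus (x := 3) (y := 1) (z := 0)
    (by decide) he
  have h120 := hf.apply_add_apply_add_apply isThreeGraph_K4minus (x := 1) (y := 2) (z := 0)
    (by decide) he
  have h320 := hf.apply_add_apply_add_apply isThreeGraph_K4minus (x := 3) (y := 2) (z := 0)
    (by decide) he
  omega

lemma column_eq_single_or_row_sum_eq_one (hf : IsUnitWeighting (ProdGraph K4minus H) f)
    (he : {i, j, k} ∈ H) :
    (fun x => f (x, i)) = Pi.single 0 1 ∨ f (1, i) + f (1, j) + f (1, k) = 1 := by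
  rw [eq_pi_single_zero_one_iff]
  have hi := hf.rows_eq_of_K4minus he
  have hj := hf.rows_eq_of_K4minus (i := j) (j := i) (k := k) (by rwa [Finset.insert_comm])
  have hk := hf.rows_eq_of_K4minus (i := k) (j := i) (k := j)
    (by rwa [Finset.insert_comm, Finset.pair_comm k j])
  have h012 := hf.apply_add_apply_add_apply isThreeGraph_K4minus (x := 0) (y := 1) (z := 2)
    (by decide) he
  have h102 := hf.apply_add_apply_add_apply isThreeGraph_K4minus (x := 1) (y := 0) (z := 2)
    (by decide) he
  have h120 := hf.apply_add_apply_add_apply isThreeGraph_K4minus (x := 1) (y := 2) (z := 0)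
    (by decide) he
  omega

lemma column_eq_single_of_mem (hf : IsUnitWeighting (ProdGraph K4minus H) f)
    (he : {i, j, k} ∈ H) (hi : (fun x => f (x, i)) = Pi.single 0 1) :
    (fun x => f (x, j)) = Pi.single 0 1 := by
  rw [eq_pi_single_zero_one_iff] at hi ⊢
  have hj := hf.rows_eq_of_K4minus (i := j) (j := i) (k := k) (by rwa [Finset.insert_comm])
  have h012 := hf.apply_add_apply_add_apply isThreeGraph_K4minus (x := 0) (y := 1) (z := 2)
    (by decide) he
  have h102 := hf.apply_add_apply_add_apply isThreeGraph_K4minus (x := 1) (y := 0) (z := 2)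
    (by decide) he
  omega

theorem column_eq_single (hf : IsUnitWeighting (ProdGraph K4minus H) f) (hH : IsThreeGraph H)
    (hconn : IsConnectedThreeGraph H) (hunit : ∀ r, ¬ IsUnitWeighting H r) (i : β) :
    (fun x => f (x, i)) = Pi.single 0 1 := by
  refine Set.eq_univ_iff_forall.1 (hconn {i | (fun x => f (x, i)) = Pi.single 0 1}
    (fun _ _ _ => hf.column_eq_single_of_mem) ?_) i
  by_contra hempty
  refine hunit (fun i => f (1, i)) fun e he => ?_
  have hcard := hH e he
  obtain ⟨i, j, k, -, -, -, rfl⟩ := Finset.card_eq_three.1 hcard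
  rw [sum_triple_of_card_eq_three hcard]
  exact (hf.column_eq_single_or_row_sum_eq_one he).resolve_left fun hi => hempty ⟨i, hi⟩

end IsUnitWeighting

end K4minusProduct

section CutTemplate

variable {U : Type*} [AddCommGroup U] [Module (ZMod 2) U] {C : Set (U →ₗ[ZMod 2] ZMod 2)}

lemma isThreeGraph_cutTemplate : IsThreeGraph (CutTemplate U C) := by
  rintro _ ⟨c, u, v, huv, -, rfl⟩
  exact Finset.card_eq_three.2 ⟨_, _, _, by simp, by simp, by simpa using huv, rfl⟩

lemma isUnitWeighting_cutTemplate : IsUnitWeighting (CutTemplate U C) (Sum.elim 1 0) := by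
  rintro _ he
  obtain ⟨c, u, v, -, -, rfl⟩ := id he
  rw [sum_triple_of_card_eq_three (isThreeGraph_cutTemplate _ he)]
  simp

lemma apply_ne_apply_of_mem_cutTemplate {c : C} {u v : U}
    (h : {Sum.inl c, Sum.inr u, Sum.inr v} ∈ CutTemplate U C) : c.1 u ≠ c.1 v := by
  obtain ⟨c', u', v', -, hcut, he⟩ := h
  have hne : c'.1 u' ≠ c'.1 v' := fun heq => by
    rw [map_add, heq, CharTwo.add_self_eq_zero] at hcut
    exact zero_ne_one hcut
  have hc : Sum.inl c' ∈ ({Sum.inl c, Sum.inr u, Sum.inr v} : Finset (C ⊕ U)) := by simp [he]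
  have hu : Sum.inr u' ∈ ({Sum.inl c, Sum.inr u, Sum.inr v} : Finset (C ⊕ U)) := by simp [he]
  have hv : Sum.inr v' ∈ ({Sum.inl c, Sum.inr u, Sum.inr v} : Finset (C ⊕ U)) := by simp [he]
  simp only [Finset.mem_insert, Finset.mem_singleton, Sum.inl.injEq, Sum.inr.injEq, reduceCtorEq,
    or_false, false_or] at hc hu hv
  rcases hu with rfl | rfl <;> rcases hv with rfl | rfl
  · exact absurd rfl hne
  · exact hc ▸ hne
  · exact hc ▸ hne.symm
  · exact absurd rfl hne

theorem exists_isLinkColoring_of_isHomOn_cutTemplate {β : Type*} [DecidableEq β]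
    {H : Set (Finset β)} (hH : IsThreeGraph H) (hconn : IsConnectedThreeGraph H)
    (hunit : ∀ r, ¬ IsUnitWeighting H r) {ψ : Fin 4 × β → C ⊕ U}
    (hψ : IsHomOn (ProdGraph K4minus H) (CutTemplate U C) ψ) :
    ∃ (c : β → C) (u : β → U), IsLinkColoring H fun i j => (c i).1 (u j) := by
  have hcol := (isUnitWeighting_cutTemplate.comp_isHomOn isThreeGraph_prodGraph hψ).column_eq_single
    hH hconn hunit
  have hapex : ∀ i, ∃ c, ψ (0, i) = Sum.inl c := fun i => by
    have := congrFun (hcol i) 0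
    rcases h : ψ (0, i) with c | u <;> simp_all
  have hbottom : ∀ x, x ≠ 0 → ∀ i, ∃ u, ψ (x, i) = Sum.inr u := fun x hx i => by
    have := congrFun (hcol i) x
    rcases h : ψ (x, i) with c | u <;> simp_all
  choose c hc using hapex
  choose u hu using hbottom
  have hcut : ∀ (x y : Fin 4) (hx : x ≠ 0) (hy : y ≠ 0), {0, x, y} ∈ K4minus →
      ∀ {i j k}, {i, j, k} ∈ H → (c i).1 (u x hx j) ≠ (c i).1 (u y hy k) := by
    intro x y hx hy hxy i j k he
    have hmem := (hψ _ (insert_mem_prodGraph isThreeGraph_K4minus hxy he)).2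
    simp only [Finset.image_insert, Finset.image_singleton, hc, hu _ hx, hu _ hy] at hmem
    exact apply_ne_apply_of_mem_cutTemplate (by convert hmem)
  refine ⟨c, u 1 (by decide), fun i j k he => ?_⟩
  -- `1, 2, 3` is a triangle in the link of `0`: the value of `c i` flips three times along
  -- `u 1 j`, `u 2 k`, `u 3 j`, `u 1 k`.
  have h12 := hcut 1 2 (by decide) (by decide) (by decide) he
  have h32 := hcut 3 2 (by decide) (by decide) (by decide) he
  have h31 := hcut 3 1 (by decide) (by decide) (by decide) he
  have hj : (c i).1 (u 1 (by decide) j) = (c i).1 (u 3 (by decide) j) :=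
    zmod_two_eq_of_ne_of_ne h12.symm h32.symm
  exact fun heq => h31 (hj.symm.trans heq)

end CutTemplate

section Fstar

instance : DecidablePred (· ∈ Fstar) := fun e => inferInstanceAs
  (Decidable (e = {0, 1, 2} ∨ e = {0, 1, 3} ∨ e = {2, 3, 4} ∨ e = {0, 4, 5} ∨ e = {1, 4, 6}))

lemma isThreeGraph_Fstar : IsThreeGraph Fstar := by
  rintro e (rfl | rfl | rfl | rfl | rfl) <;> rfl

lemma isConnectedThreeGraph_Fstar : IsConnectedThreeGraph Fstar := by
  intro s hs hne
  have hiff : ∀ i j k, {i, j, k} ∈ Fstar → (i ∈ s ↔ j ∈ s) := fun i j k he =>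
    ⟨hs i j k he, hs j i k (Finset.insert_comm i j {k} ▸ he)⟩
  have h01 := hiff 0 1 2 (by decide)
  have h02 := hiff 0 2 1 (by decide)
  have h03 := hiff 0 3 1 (by decide)
  have h04 := hiff 0 4 5 (by decide)
  have h05 := hiff 0 5 4 (by decide)
  have h16 := hiff 1 6 4 (by decide)
  have hall : ∀ i, 0 ∈ s ↔ i ∈ s := by
    intro i
    fin_cases i <;> tauto
  obtain ⟨i, hi⟩ := hne
  exact Set.eq_univ_of_forall fun j => (hall j).1 ((hall i).2 hi)

lemma not_isUnitWeighting_Fstar (r : Fin 7 → ℕ) : ¬ IsUnitWeighting Fstar r := by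
  intro hr
  have hsum : ∀ i j k, {i, j, k} ∈ Fstar → r i + r j + r k = 1 := fun i j k he => by
    rw [← hr _ he, sum_triple_of_card_eq_three (isThreeGraph_Fstar _ he)]
  have h012 := hsum 0 1 2 (by decide)
  have h013 := hsum 0 1 3 (by decide)
  have h234 := hsum 2 3 4 (by decide)
  have h045 := hsum 0 4 5 (by decide)
  have h146 := hsum 1 4 6 (by decide)
  omega

end Fstar

section Plane

lemma exists_smul_eq_of_apply_eq_zero {K V : Type*} [DivisionRing K] [AddCommGroup V] [Module K V]
    [FiniteDimensional K V] (hV : finrank K V ≤ 2) {f : Dual K V} (hf : f ≠ 0) {x y : V}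
    (hx : x ≠ 0) (hfx : f x = 0) (hfy : f y = 0) : ∃ a : K, a • x = y := by
  have hx' : (⟨x, hfx⟩ : LinearMap.ker f) ≠ 0 := fun h => hx (congrArg Subtype.val h)
  have : Nontrivial (LinearMap.ker f) := ⟨_, _, hx'⟩
  have hker : finrank K (LinearMap.ker f) = 1 := by
    have hpos : 0 < finrank K (LinearMap.ker f) := finrank_pos
    have hadd := Dual.finrank_ker_add_one_of_ne_zero hf
    omega
  obtain ⟨a, ha⟩ := exists_smul_eq_of_finrank_eq_one hker hx' ⟨y, hfy⟩
  exact ⟨a, congrArg Subtype.val ha⟩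

variable {V : Type*} [AddCommGroup V] [Module (ZMod 2) V] [FiniteDimensional (ZMod 2) V]

lemma eq_of_apply_eq_zero (hV : finrank (ZMod 2) V ≤ 2) {f : Dual (ZMod 2) V} (hf : f ≠ 0)
    {x y : V} (hx : x ≠ 0) (hy : y ≠ 0) (hfx : f x = 0) (hfy : f y = 0) : x = y := by
  obtain ⟨a, rfl⟩ := exists_smul_eq_of_apply_eq_zero hV hf hx hfx hfy
  have ha : a ≠ 0 := fun ha => hy (by rw [ha, zero_smul])
  rw [zmod_two_eq_of_ne_of_ne ha.symm zero_ne_one, one_smul]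

lemma sub_eq_sub_of_apply_eq_apply (hV : finrank (ZMod 2) V ≤ 2) {c : V} (hc : c ≠ 0)
    {p p' q q' : Dual (ZMod 2) V} (hp : p ≠ p') (hq : q ≠ q') (hcp : p c = p' c)
    (hcq : q c = q' c) : p - p' = q - q' := by
  have heval : Dual.eval (ZMod 2) V c ≠ 0 := by rwa [Ne, eval_apply_eq_zero_iff]
  refine eq_of_apply_eq_zero (Subspace.dual_finrank_eq.trans_le hV) heval (sub_ne_zero.2 hp)
    (sub_ne_zero.2 hq) ?_ ?_ <;> simpa [sub_eq_zero]

theorem not_isLinkColoring_Fstar (hV : finrank (ZMod 2) V ≤ 2) (c : Fin 7 → V)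
    (u : Fin 7 → Dual (ZMod 2) V) : ¬ IsLinkColoring Fstar fun i j => u j (c i) := by
  intro h
  have hc : ∀ i j k, {i, j, k} ∈ Fstar → c i ≠ 0 := fun i j k he hi => h i j k he (by simp [hi])
  have hu : ∀ i j k, {i, j, k} ∈ Fstar → u j ≠ u k := fun i j k he hjk => h i j k he (by simp [hjk])
  have hc01 : c 0 = c 1 :=
    eq_of_apply_eq_zero hV (sub_ne_zero.2 (hu 4 2 3 (by decide)))
      (hc 0 1 2 (by decide)) (hc 1 0 2 (by decide))
      (sub_eq_zero.2 (zmod_two_eq_of_ne_of_ne (h 0 1 2 (by decide)) (h 0 1 3 (by decide))))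
      (sub_eq_zero.2 (zmod_two_eq_of_ne_of_ne (h 1 0 2 (by decide)) (h 1 0 3 (by decide))))
  have h02 : u 0 (c 0) ≠ u 2 (c 0) := hc01 ▸ h 1 0 2 (by decide)
  have h03 : u 0 (c 0) ≠ u 3 (c 0) := hc01 ▸ h 1 0 3 (by decide)
  have h01 : u 0 (c 0) = u 1 (c 0) := zmod_two_eq_of_ne_of_ne h02.symm (h 0 2 1 (by decide))
  have hdiff : ∀ {i j k l}, u i ≠ u j → u k ≠ u l → u i (c 0) = u j (c 0) →
      u k (c 0) = u l (c 0) → u i - u j = u k - u l :=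
    sub_eq_sub_of_apply_eq_apply hV (hc 0 1 2 (by decide))
  have h04 : u 0 (c 0) ≠ u 4 (c 0) := fun h04 => hu 6 1 4 (by decide) <| sub_right_injective <|
    hdiff (hu 2 0 1 (by decide)) (hu 5 0 4 (by decide)) h01 h04
  exact hu 4 2 3 (by decide) <| sub_left_injective <|
    hdiff (hu 3 2 4 (by decide)) (hu 2 3 4 (by decide))
      (zmod_two_eq_of_ne_of_ne h02 h04) (zmod_two_eq_of_ne_of_ne h03 h04)

end Plane

theorem not_isHomOn_F_cutTemplate {U : Type*} [AddCommGroup U] [Module (ZMod 2) U]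
    {C : Set (U →ₗ[ZMod 2] ZMod 2)} (hrank : Module.rank (ZMod 2) (Submodule.span (ZMod 2) C) ≤ 2)
    (ψ : Fin 4 × Fin 7 → C ⊕ U) : ¬ IsHomOn F (CutTemplate U C) ψ := by
  intro hψ
  obtain ⟨c, u, hcu⟩ := exists_isLinkColoring_of_isHomOn_cutTemplate isThreeGraph_Fstar
    isConnectedThreeGraph_Fstar not_isUnitWeighting_Fstar hψ
  have : FiniteDimensional (ZMod 2) (Submodule.span (ZMod 2) C) :=
    rank_lt_aleph0_iff.1 (hrank.trans_lt (Cardinal.natCast_lt_aleph0))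
  exact not_isLinkColoring_Fstar (finrank_le_of_rank_le hrank)
    (fun i => ⟨c i, Submodule.subset_span (c i).2⟩)
    (fun j => (Dual.eval (ZMod 2) U (u j)).comp (Submodule.span (ZMod 2) C).subtype) hcu

theorem blowup_of_rank_two_cut_template_F_free_general {U : Type*} [AddCommGroup U]
    [Module (ZMod 2) U] {C : Set (U →ₗ[ZMod 2] ZMod 2)}
    (hrank : Module.rank (ZMod 2) (Submodule.span (ZMod 2) C) ≤ 2) {β : Type*} (g : β → C ⊕ U) :
    ¬ ContainsCopy F (Blowup (CutTemplate U C) g) := fun hcopy =>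
  let ⟨ψ, hψ⟩ := hcopy.exists_isHomOn_of_blowup isThreeGraph_cutTemplate
  not_isHomOn_F_cutTemplate hrank ψ hψ

/-- If `𝒞` consists of nonzero linear forms and `dim span 𝒞 ≤ 2`, then every blowup of
the cut template `R(U, 𝒞)` contains no subgraph isomorphic to `F = K4⁻ × F*`. -/
theorem blowup_of_rank_two_cut_template_F_free (U : Type) [AddCommGroup U]
    [Module (ZMod 2) U] [FiniteDimensional (ZMod 2) U] (C : Set (U →ₗ[ZMod 2] ZMod 2))
    (hC : ∀ c ∈ C, c ≠ 0)
    (hrank : Module.finrank (ZMod 2) ↥(Submodule.span (ZMod 2) C) ≤ 2) :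
    ∀ (β : Type) (g : β → ↥C ⊕ U), ¬ ContainsCopy F (Blowup (CutTemplate U C) g) := by
  intro β g
  exact blowup_of_rank_two_cut_template_F_free_general
    (by rw [← finrank_eq_rank]; exact_mod_cast hrank) g
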